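/- For every natural number n and every B in {3, 6, 10, 12, 13, 14, 15, 18, 20, 23, 24, 25, 26, 28}, the number of 232-regular partitions satisfies b_232(841n + 29B − 35) ≡ p_21(29n + B) (mod 2). -/

import Mathlib

/-- The number of `m`-regular partitions of `n`, i.e. partitions of `n`
in which no part is divisible by `m`. -/
noncomputable def numRegularPartitions (m n : ℕ) : ℕ :=
  Nat.card {π : n.Partition // ∀ j ∈ π.parts, ¬ m ∣ j}

/-- The number of `t`-multipartitions of `n`, i.e. `t`-tuples of partitions
whose sizes sum to `n`. -/
noncomputable def numMultipartitions (t n : ℕ) : ℕ :=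
  Nat.card {f : Fin t → Σ k : ℕ, k.Partition // (∑ i, (f i).1) = n}

/-!
Write `f = ∏ (1 - Xⁿ)` and `P = 1 / f`. Since `29 ≡ 2` modulo `3`, the Hecke operator `T₂₉` takes
`η⁻⁸` to a form of weight `-4` with the same multiplier as `η⁸`, and `η²³²` times this image is a
modular form of weight `112` and level one. Modulo `2`, where `E₄ = 1`, its expansion is therefore a
polynomial of degree at most `9` in `Δ = X f²⁴`. That expansion is also an eighth power, and knowing
its eighth root modulo `X²` is enough to identify the polynomial as `1 + Δ⁸`. Hence, modulo `2`,
`f²⁹ (P(X²⁹) + X² S) = 1 + X f²⁴` with `S = ∑ p(29 m + 23) Xᵐ`, or, multiplying by `P²¹`,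
`f⁸ P(X²⁹) + X² f⁸ S = P²¹ + X f³`.

Here `f⁸ S` is the generating function of `b₂₃₂(29 m + 23)`, because `f(X²³²) = f(X²⁹)⁸`. Completing
the square in the pentagonal numbers, and using that the odd exponents of `Δ` modulo `2` are
squares, one sees that `f⁸ P(X²⁹)` and `X f³` only involve powers `Xᴺ` for which `3 N + 1` is a
square modulo `29`. The residue classes of the theorem are the remaining ones.
-/

section Dissection

open PowerSeries

variable {R : Type*} [CommRing R] {N d r s t : ℕ}

/-- The `r`-th component of the `N`-dissection of a power series: the series whose `m`-th
coefficient is the coefficient of `X ^ (N * m + r)`. For `r = 0` this is the operator `U_N`. -/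
noncomputable def dissection (N r : ℕ) (F : R⟦X⟧) : R⟦X⟧ :=
  .mk fun m ↦ coeff (N * m + r) F

@[simp]
theorem coeff_dissection (F : R⟦X⟧) (m : ℕ) :
    coeff m (dissection N r F) = coeff (N * m + r) F :=
  coeff_mk _ _

theorem map_dissection {S : Type*} [CommRing S] (φ : R →+* S) (F : R⟦X⟧) :
    map φ (dissection N r F) = dissection N r (map φ F) := by
  ext m
  simp

theorem dissection_expand_mul (hN : N ≠ 0) (hr : r < N) (A F : R⟦X⟧) :
    dissection N r (expand N hN A * F) = A * dissection N r F := by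
  ext m
  rw [coeff_dissection, coeff_mul, coeff_mul]
  refine (Finset.sum_of_injOn (fun x ↦ (N * x.1, N * x.2 + r)) ?_ ?_ ?_ ?_).symm
  · intro x _ y _ hxy
    simpa [Prod.ext_iff, hN] using hxy
  · intro x hx
    simp only [Finset.mem_coe, Finset.HasAntidiagonal.mem_antidiagonal] at hx ⊢
    linear_combination N * hx
  · rintro ⟨i, j⟩ hij hnot
    rw [Finset.HasAntidiagonal.mem_antidiagonal] at hij
    rw [coeff_expand_of_not_dvd, zero_mul]
    rintro ⟨k, rfl⟩
    have hk : k ≤ m := by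
      by_contra! hlt
      nlinarith
    obtain ⟨l, rfl⟩ := Nat.exists_eq_add_of_le hk
    exact hnot ⟨(k, l), by simp, by simp only [Prod.mk.injEq, true_and]; lia⟩
  · intro x _
    simp only [coeff_expand_mul, coeff_dissection]

theorem dissection_expand (hd : d ≠ 0) (hdN : d.Coprime N) (hs : d * s = N * t + r) (ht : t < d)
    (F : R⟦X⟧) :
    dissection N r (expand d hd F) = X ^ t * expand d hd (dissection N s F) := by
  ext m
  rw [coeff_dissection, coeff_X_pow_mul']
  by_cases hm : d ∣ N * m + r
  · have htm : t ≡ m [MOD d] := by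
      refine Nat.ModEq.cancel_left_of_coprime hdN (Nat.ModEq.add_right_cancel' r ?_)
      exact (Nat.modEq_zero_iff_dvd.2 ⟨s, hs.symm⟩).trans (Nat.modEq_zero_iff_dvd.2 hm).symm
    have hle : t ≤ m := by
      by_contra! hlt
      exact hlt.ne' (Nat.ModEq.eq_of_lt_of_lt htm ht (hlt.trans ht))
    obtain ⟨l, hl⟩ := (Nat.modEq_iff_dvd' hle).1 htm
    obtain rfl : m = d * l + t := by lia
    rw [if_pos hle, hl, show N * (d * l + t) + r = d * (N * l + s) by linear_combination -hs]
    simp only [coeff_expand_mul, coeff_dissection]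
  · rw [coeff_expand_of_not_dvd d hd F hm]
    split_ifs with hle
    · refine (coeff_expand_of_not_dvd d hd _ fun hdvd ↦ hm ?_).symm
      obtain ⟨l, hl⟩ := hdvd
      obtain rfl : m = d * l + t := by lia
      exact ⟨N * l + s, by linear_combination -hs⟩
    · rfl

end Dissection

section PowerSeries

open PowerSeries

theorem pow_prime_pow_eq_expand (p : ℕ) [Fact p.Prime] (k : ℕ) (F : (ZMod p)⟦X⟧) :
    F ^ p ^ k = expand (p ^ k) (pow_ne_zero k (NeZero.ne p)) F := by
  have frobenius_eq (G : (ZMod p)⟦X⟧) : G ^ p = expand p (NeZero.ne p) G := by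
    have h := MvPowerSeries.map_frobenius_expand (p := p) (hp := NeZero.ne p) (f := G)
    rw [ZMod.frobenius_zmod, MvPowerSeries.map_id] at h
    exact h.symm
  induction k with
  | zero => simp
  | succ k ih =>
    calc F ^ p ^ (k + 1) = (F ^ p ^ k) ^ p := by rw [← pow_mul, pow_succ]
      _ = expand (p * p ^ k) (mul_ne_zero (NeZero.ne p) (pow_ne_zero k (NeZero.ne p))) F := by
        rw [frobenius_eq, ih, ← expand_mul]
      _ = expand (p ^ (k + 1)) (pow_ne_zero (k + 1) (NeZero.ne p)) F := by
        simp only [pow_succ']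

theorem constantCoeff_aeval_X_mul {R : Type*} [CommRing R] (u : R⟦X⟧) (Q : Polynomial R) :
    constantCoeff (Polynomial.aeval (X * u) Q) = Q.coeff 0 := by
  conv_lhs => rw [← Q.divX_mul_X_add]
  simp

theorem eq_zero_of_X_pow_dvd_aeval {R : Type*} [CommRing R] [IsDomain R] {u : R⟦X⟧}
    (hu : constantCoeff u ≠ 0) {Q : Polynomial R} {n : ℕ} (hn : Q.natDegree < n)
    (h : X ^ n ∣ Polynomial.aeval (X * u) Q) : Q = 0 := by
  by_contra hQ
  obtain ⟨S, hS, hdvd⟩ := Polynomial.exists_eq_pow_rootMultiplicity_mul_and_not_dvd Q hQ 0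
  rw [map_zero, sub_zero] at hS hdvd
  set k := Q.rootMultiplicity 0
  have hk : k < n := by
    simpa using (Polynomial.natDegree_le_of_dvd ⟨S, hS⟩ hQ).trans_lt hn
  rw [hS, map_mul, map_pow, Polynomial.aeval_X, mul_pow, mul_assoc] at h
  have hX := (mul_dvd_mul_iff_left (pow_ne_zero k X_ne_zero)).1 ((pow_dvd_pow X hk).trans h)
  rw [X_dvd_iff, map_mul, map_pow, constantCoeff_aeval_X_mul] at hX
  exact hdvd (Polynomial.X_dvd_iff.2 ((mul_eq_zero.1 hX).resolve_left (pow_ne_zero k hu)))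

end PowerSeries

section PartitionSeries

open PowerSeries PowerSeries.WithPiTopology

theorem constantCoeff_pentagonalSeries (R : Type*) [CommRing R] :
    constantCoeff (pentagonalSeries R) = 1 := by
  simpa [pentagonal] using coeff_pentagonalSeries_pentagonal R 0

theorem coeff_one_pentagonalSeries (R : Type*) [CommRing R] :
    coeff 1 (pentagonalSeries R) = -1 := by
  simpa [pentagonal] using coeff_pentagonalSeries_pentagonal R 1

/-- The generating function of the partition numbers. -/
noncomputable def partitionSeries (R : Type*) [CommRing R] : R⟦X⟧ :=
  .mk fun n ↦ (Fintype.card n.Partition : R)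

theorem map_partitionSeries {R S : Type*} [CommRing R] [CommRing S] (φ : R →+* S) :
    map φ (partitionSeries R) = partitionSeries S := by
  ext n
  simp [partitionSeries]

theorem map_pentagonalSeries {R S : Type*} [CommRing R] [CommRing S] (φ : R →+* S) :
    map φ (pentagonalSeries R) = pentagonalSeries S := by
  ext n
  by_cases hn : n ∈ Set.range pentagonal
  · obtain ⟨k, rfl⟩ := hn
    simp [coeff_pentagonalSeries_pentagonal]
  · simp [coeff_pentagonalSeries_eq_zero _ hn]

variable {R : Type*} [CommRing R]

theorem hasProd_restricted_mul_pentagonalSeries [Nontrivial R] [TopologicalSpace R]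
    [T2Space R] [IsTopologicalRing R] (p : ℕ → Prop) [DecidablePred p] :
    HasProd (fun i ↦ if p (i + 1) then (1 : R⟦X⟧) else 1 - X ^ (i + 1))
      (.mk (fun n ↦ ((Nat.Partition.restricted n p).card : R)) * pentagonalSeries R) := by
  refine ((Nat.Partition.hasProd_powerSeriesMk_card_restricted R p).mul
    (hasProd_one_sub_X_pow R)).congr_fun fun i ↦ ?_
  split_ifs
  · simpa only [pow_mul] using (tsum_pow_mul_one_sub_of_constantCoeff_eq_zero
      (f := (X : R⟦X⟧) ^ (i + 1)) (by simp)).symm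
  · rw [one_mul]

theorem partitionSeries_mul_pentagonalSeries [Nontrivial R] :
    partitionSeries R * pentagonalSeries R = 1 := by
  let _ : TopologicalSpace R := ⊥
  have _ : DiscreteTopology R := ⟨rfl⟩
  have h := hasProd_restricted_mul_pentagonalSeries (R := R) fun _ ↦ True
  simp only [if_true] at h
  simpa [Nat.Partition.restricted, partitionSeries] using h.unique hasProd_one

theorem continuous_expand [TopologicalSpace R] (m : ℕ) (hm : m ≠ 0) :
    Continuous (expand m hm : R⟦X⟧ → R⟦X⟧) := by
  refine continuous_iff_continuousAt.2 fun F ↦ (tendsto_iff_coeff_tendsto _ _ _ _).2 fun n ↦ ?_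
  simp only [coeff_expand]
  split_ifs
  · exact (continuous_coeff R _).tendsto F
  · exact tendsto_const_nhds

theorem hasProd_one_sub_X_pow_mul [Nontrivial R] [TopologicalSpace R] [IsTopologicalRing R]
    [T2Space R] (m : ℕ) (hm : m ≠ 0) :
    HasProd (fun i ↦ if ¬ m ∣ i + 1 then (1 : R⟦X⟧) else 1 - X ^ (i + 1))
      (expand m hm (pentagonalSeries R)) := by
  have hsucc (i : ℕ) : (i + 1) * m - 1 + 1 = (i + 1) * m :=
    Nat.sub_add_cancel (Nat.mul_pos i.succ_pos (Nat.pos_of_ne_zero hm))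
  have hinj : Function.Injective fun i : ℕ ↦ (i + 1) * m - 1 := fun i j hij ↦ by
    have h : (i + 1) * m = (j + 1) * m := by rw [← hsucc i, ← hsucc j]; exact congrArg (· + 1) hij
    exact Nat.succ_injective (Nat.eq_of_mul_eq_mul_right (Nat.pos_of_ne_zero hm) h)
  rw [← hinj.hasProd_iff]
  · convert (hasProd_one_sub_X_pow R).map (expand m hm : R⟦X⟧ →ₐ[R] R⟦X⟧)
      (continuous_expand m hm) using 1
    funext i
    simp [hsucc, ← pow_mul, mul_comm m]
  · intro i hi
    refine if_pos fun ⟨j, hj⟩ ↦ hi ⟨j - 1, ?_⟩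
    have hj0 : j ≠ 0 := by rintro rfl; simp at hj
    simp only [Nat.sub_add_cancel (Nat.one_le_iff_ne_zero.2 hj0), mul_comm j, ← hj,
      Nat.add_sub_cancel]

theorem mk_numRegularPartitions_mul_pentagonalSeries [Nontrivial R] (m : ℕ) (hm : m ≠ 0) :
    .mk (fun n ↦ (numRegularPartitions m n : R)) * pentagonalSeries R
      = expand m hm (pentagonalSeries R) := by
  let _ : TopologicalSpace R := ⊥
  have _ : DiscreteTopology R := ⟨rfl⟩
  have hcard (n : ℕ) : numRegularPartitions m n =
      (Nat.Partition.restricted n fun j ↦ ¬ m ∣ j).card := by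
    rw [numRegularPartitions, Nat.card_eq_fintype_card, Fintype.card_subtype]
    rfl
  simp only [hcard]
  exact (hasProd_restricted_mul_pentagonalSeries _).unique (hasProd_one_sub_X_pow_mul m hm)

/-- A `t`-multipartition of `n` is a composition `l` of `n` into `t` nonnegative summands together
with a partition of each `l i`. -/
noncomputable def multipartitionEquiv (t n : ℕ) :
    {f : Fin t → Σ k : ℕ, k.Partition // (∑ i, (f i).1) = n} ≃
      Σ l : Finset.finsuppAntidiag (Finset.univ : Finset (Fin t)) n, ∀ i, (l.1 i).Partition where
  toFun f := ⟨⟨Finsupp.equivFunOnFinite.symm fun i ↦ (f.1 i).1, by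
    simpa [Finset.mem_finsuppAntidiag] using f.2⟩, fun i ↦ (f.1 i).2⟩
  invFun g := ⟨fun i ↦ ⟨g.1.1 i, g.2 i⟩, (Finset.mem_finsuppAntidiag.1 g.1.2).1⟩
  left_inv _ := rfl
  right_inv := by
    rintro ⟨⟨l, hl⟩, g⟩
    obtain ⟨l, rfl⟩ := Finsupp.equivFunOnFinite.symm.surjective l
    rfl

theorem mk_numMultipartitions (t : ℕ) :
    .mk (fun n ↦ (numMultipartitions t n : R)) = partitionSeries R ^ t := by
  ext n
  have hprod := coeff_prod (fun _ : Fin t ↦ partitionSeries R) n Finset.univ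
  rw [Finset.prod_const, Finset.card_univ, Fintype.card_fin] at hprod
  rw [coeff_mk, hprod, numMultipartitions, Nat.card_congr (multipartitionEquiv t n),
    Nat.card_eq_fintype_card, Fintype.card_sigma]
  simp only [Fintype.card_pi, partitionSeries, coeff_mk, Nat.cast_sum, Nat.cast_prod]
  exact Finset.sum_coe_sort (Finset.finsuppAntidiag Finset.univ n)
    fun l ↦ ∏ i, (Fintype.card (l i).Partition : R)

end PartitionSeries

section PowerSeriesSums

open PowerSeries

/-- The series `∑ aₙ qⁿ` with coefficients those of `F` converges (absolutely, as it is a series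
of complex numbers) to `v`. -/
def HasSumAt (F : ℂ⟦X⟧) (q v : ℂ) : Prop :=
  HasSum (fun n ↦ coeff n F * q ^ n) v

theorem sum_stdAddChar_neg_mul_pow (N : ℕ) [NeZero N] (r n : ℕ) :
    ∑ j : ZMod N, ZMod.stdAddChar (-(r * j) : ZMod N) * ZMod.stdAddChar j ^ n =
      if (n : ZMod N) = r then (N : ℂ) else 0 := by
  have h := AddChar.sum_mulShift ((n : ZMod N) - r) (ZMod.isPrimitive_stdAddChar N)
  rw [ZMod.card, Nat.cast_ite, Nat.cast_zero] at h
  simp only [sub_eq_zero] at h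
  rw [← h]
  refine Finset.sum_congr rfl fun j _ ↦ ?_
  rw [← AddChar.map_nsmul_eq_pow, ← AddChar.map_add_eq_mul, nsmul_eq_mul]
  congr 1
  ring

namespace HasSumAt

variable {F G : ℂ⟦X⟧} {q v w : ℂ}

theorem add (hF : HasSumAt F q v) (hG : HasSumAt G q w) : HasSumAt (F + G) q (v + w) := by
  simpa [HasSumAt, add_mul] using HasSum.add hF hG

theorem mul (hF : HasSumAt F q v) (hG : HasSumAt G q w) : HasSumAt (F * G) q (v * w) := by
  have hterm (n : ℕ) : coeff n (F * G) * q ^ n = ∑ kl ∈ Finset.HasAntidiagonal.antidiagonal n,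
      (coeff kl.1 F * q ^ kl.1) * (coeff kl.2 G * q ^ kl.2) := by
    rw [coeff_mul, Finset.sum_mul]
    refine Finset.sum_congr rfl fun x hx ↦ ?_
    rw [← Finset.HasAntidiagonal.mem_antidiagonal.1 hx, pow_add]
    ring
  have hFn := (HasSum.summable hF).norm
  have hGn := (HasSum.summable hG).norm
  rw [HasSumAt, ← hF.tsum_eq, ← hG.tsum_eq,
    tsum_mul_tsum_eq_tsum_sum_antidiagonal_of_summable_norm hFn hGn]
  simpa only [hterm] using
    (summable_norm_sum_mul_antidiagonal_of_summable_norm hFn hGn).of_norm.hasSum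

theorem const (a q : ℂ) : HasSumAt (C a) q a := by
  simpa [HasSumAt] using hasSum_single (f := fun n ↦ coeff n (C a) * q ^ n) 0
    fun n hn ↦ by simp [coeff_C, hn]

theorem one (q : ℂ) : HasSumAt 1 q 1 := by
  simpa using const 1 q

theorem pow (hF : HasSumAt F q v) (n : ℕ) : HasSumAt (F ^ n) q (v ^ n) := by
  induction n with
  | zero => simpa using one q
  | succ n ih => simpa only [pow_succ] using ih.mul hF

theorem X (q : ℂ) : HasSumAt X q q := by
  simpa [HasSumAt] using hasSum_single (f := fun n ↦ coeff n (PowerSeries.X : ℂ⟦X⟧) * q ^ n) 1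
    fun n hn ↦ by simp [coeff_X, hn]

theorem expand (m : ℕ) (hm : m ≠ 0) (hF : HasSumAt F (q ^ m) v) :
    HasSumAt (expand m hm F) q v := by
  have hinj : Function.Injective (m * ·) := fun a b hab ↦
    Nat.eq_of_mul_eq_mul_left (Nat.pos_of_ne_zero hm) hab
  refine (hinj.hasSum_iff fun n hn ↦ ?_).1 ?_
  · rw [coeff_expand_of_not_dvd, zero_mul]
    rintro ⟨k, rfl⟩
    exact hn ⟨k, rfl⟩
  · simpa only [HasSumAt, Function.comp_def, coeff_expand_mul, pow_mul] using hF

theorem hasFPowerSeriesOnBall {v : ℂ → ℂ} (hF : ∀ q, ‖q‖ < 1 → HasSumAt F q (v q)) :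
    HasFPowerSeriesOnBall v (.ofScalars ℂ fun n ↦ coeff n F) 0 1 where
  r_le := by
    refine le_of_forall_lt_imp_le_of_dense fun r hr ↦ ?_
    lift r to NNReal using hr.ne_top
    refine FormalMultilinearSeries.le_radius_of_summable _ ?_
    simpa using (HasSum.summable (hF (r : ℂ) (by simpa using hr))).norm
  r_pos := one_pos
  hasSum {y} hy := by
    rw [← ENNReal.coe_one, Metric.eball_coe, NNReal.coe_one, mem_ball_zero_iff] at hy
    simpa [HasSumAt, mul_comm] using hF y hy

theorem unique {v : ℂ → ℂ} (hF : ∀ q, ‖q‖ < 1 → HasSumAt F q (v q))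
    (hG : ∀ q, ‖q‖ < 1 → HasSumAt G q (v q)) : F = G := by
  have h := (hasFPowerSeriesOnBall hF).hasFPowerSeriesAt.eq_formalMultilinearSeries
    (hasFPowerSeriesOnBall hG).hasFPowerSeriesAt
  ext n
  simpa using congr_arg (FormalMultilinearSeries.coeff · n) h

theorem exists_of_differentiableOn {v : ℂ → ℂ}
    (hv : DifferentiableOn ℂ v (Metric.ball 0 1)) :
    ∃ T : ℂ⟦X⟧, ∀ q, ‖q‖ < 1 → HasSumAt T q (v q) := by
  refine ⟨.mk fun n ↦ (n.factorial : ℂ)⁻¹ * iteratedDeriv n v 0, fun q hq ↦ ?_⟩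
  refine (Complex.hasSum_taylorSeries_on_ball hv (z := q) (by simpa using hq)).congr_fun fun n ↦ ?_
  simp only [coeff_mk, smul_eq_mul, sub_zero]
  ring

theorem inv {v : ℂ → ℂ} (hFG : F * G = 1) (hF : ∀ q, ‖q‖ < 1 → HasSumAt F q (v q))
    (hv : ∀ q, ‖q‖ < 1 → v q ≠ 0) (hq : ‖q‖ < 1) : HasSumAt G q (v q)⁻¹ := by
  have hball : Metric.eball (0 : ℂ) 1 = Metric.ball 0 1 := by
    rw [← ENNReal.coe_one, Metric.eball_coe, NNReal.coe_one]
  have hdiff : DifferentiableOn ℂ v (Metric.ball 0 1) :=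
    hball ▸ (hasFPowerSeriesOnBall hF).differentiableOn
  obtain ⟨T, hT⟩ := exists_of_differentiableOn (hdiff.inv fun q hq ↦ hv q (by simpa using hq))
  have hFT : F * T = 1 := unique (v := fun _ ↦ 1)
    (fun q hq ↦ by simpa [hv q hq] using (hF q hq).mul (hT q hq)) fun q _ ↦ one q
  obtain rfl : G = T := by linear_combination T * hFG - G * hFT
  exact hT q hq

open ZMod in
theorem dissection {N : ℕ} [NeZero N] {r : ℕ} (hr : r < N) {v : ZMod N → ℂ} (hq : q ≠ 0)
    (hF : ∀ j, HasSumAt F (q * stdAddChar j) (v j)) :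
    HasSumAt (dissection N r F) (q ^ N)
      ((N * q ^ r)⁻¹ * ∑ j, stdAddChar (-(r * j) : ZMod N) * v j) := by
  have hN : (N : ℂ) ≠ 0 := Nat.cast_ne_zero.2 (NeZero.ne N)
  have hfilter : HasSum (fun n ↦ (N * q ^ r)⁻¹ *
      (coeff n F * q ^ n * if (n : ZMod N) = r then (N : ℂ) else 0))
      ((N * q ^ r)⁻¹ * ∑ j, stdAddChar (-(r * j) : ZMod N) * v j) := by
    refine ((hasSum_sum (s := Finset.univ) fun j _ ↦
      HasSum.mul_left _ (hF j)).mul_left _).congr_fun fun n ↦ ?_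
    rw [← sum_stdAddChar_neg_mul_pow, Finset.mul_sum]
    exact congrArg _ (Finset.sum_congr rfl fun j _ ↦ by ring)
  have hinj : Function.Injective fun m : ℕ ↦ N * m + r := fun a b hab ↦
    Nat.eq_of_mul_eq_mul_left (NeZero.pos N) (Nat.add_right_cancel hab)
  rw [← hinj.hasSum_iff] at hfilter
  · refine hfilter.congr_fun fun m ↦ ?_
    simp only [Function.comp_apply, coeff_dissection, Nat.cast_add, Nat.cast_mul, natCast_self,
      zero_mul, zero_add, if_true, pow_add, pow_mul]
    field_simp
  · intro n hn
    rw [if_neg, mul_zero, mul_zero]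
    intro hnr
    have hmod : n % N = r := by
      rw [(natCast_eq_natCast_iff' n r N).1 hnr, Nat.mod_eq_of_lt hr]
    exact hn ⟨n / N, by simpa [hmod] using Nat.div_add_mod n N⟩

end HasSumAt

end PowerSeriesSums

section EulerFunction

open PowerSeries

/-- Euler's function `φ(q) = ∏ (1 - qⁿ)`, meaningful for `‖q‖ < 1`. -/
noncomputable def eulerFunction (q : ℂ) : ℂ := ∏' n : ℕ, (1 - q ^ (n + 1))

variable {q : ℂ}

theorem eulerFunction_ne_zero (hq : ‖q‖ < 1) : eulerFunction q ≠ 0 := by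
  refine tprod_one_add_ne_zero_of_summable (f := fun n ↦ -q ^ (n + 1)) (fun n hn ↦ ?_) ?_
  · have h1 : q ^ (n + 1) = 1 := by linear_combination -hn
    have h2 := pow_lt_one₀ (norm_nonneg q) hq n.succ_ne_zero
    rw [← norm_pow, Nat.succ_eq_add_one, h1, norm_one] at h2
    exact h2.false
  · simpa using (summable_nat_add_iff 1).2 (summable_geometric_of_lt_one (norm_nonneg q) hq)

theorem norm_prod_one_sub_pow_le (hq : ‖q‖ < 1) (k n : ℕ) :
    ‖∏ i ∈ Finset.range n, (1 - q ^ (k + i + 1))‖ ≤ Real.exp (∑' i : ℕ, ‖q‖ ^ i) :=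
  calc ‖∏ i ∈ Finset.range n, (1 - q ^ (k + i + 1))‖
      ≤ ∏ i ∈ Finset.range n, ‖1 - q ^ (k + i + 1)‖ := Finset.norm_prod_le _ _
    _ ≤ ∏ i ∈ Finset.range n, Real.exp (‖q‖ ^ i) := by
      refine Finset.prod_le_prod (fun _ _ ↦ norm_nonneg _) fun i _ ↦ ?_
      calc ‖1 - q ^ (k + i + 1)‖ ≤ ‖q‖ ^ (k + i + 1) + 1 := by
            simpa [add_comm] using norm_sub_le 1 (q ^ (k + i + 1))
        _ ≤ ‖q‖ ^ i + 1 := by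
          gcongr 1
          exact pow_le_pow_of_le_one (norm_nonneg q) hq.le (by lia)
        _ ≤ Real.exp (‖q‖ ^ i) := Real.add_one_le_exp _
    _ = Real.exp (∑ i ∈ Finset.range n, ‖q‖ ^ i) := (Real.exp_sum _ _).symm
    _ ≤ Real.exp (∑' i : ℕ, ‖q‖ ^ i) := Real.exp_le_exp.2 <|
      (summable_geometric_of_lt_one (norm_nonneg q) hq).sum_le_tsum _ fun _ _ ↦ by positivity

theorem summable_pentagonal (hq : ‖q‖ < 1) :
    Summable fun k : ℕ ↦ (-1) ^ k * (q ^ pentagonal (-k) - q ^ pentagonal (k + 1)) := by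
  have hgeo := summable_geometric_of_lt_one (norm_nonneg q) hq
  refine Summable.of_norm_bounded (hgeo.add hgeo) fun k ↦ ?_
  have hneg : k ≤ pentagonal (-k) := by
    have := two_mul_natCast_pentagonal_neg k
    zify
    nlinarith
  have hpos : k ≤ pentagonal (k + 1) := by
    have := two_mul_natCast_pentagonal (k + 1)
    zify
    nlinarith
  calc ‖(-1) ^ k * (q ^ pentagonal (-k) - q ^ pentagonal (k + 1))‖
      = ‖q ^ pentagonal (-k) - q ^ pentagonal (k + 1)‖ := by simp
    _ ≤ ‖q‖ ^ pentagonal (-k) + ‖q‖ ^ pentagonal (k + 1) := by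
      simpa only [norm_pow] using norm_sub_le (q ^ pentagonal (-k)) (q ^ pentagonal (k + 1))
    _ ≤ ‖q‖ ^ k + ‖q‖ ^ k := add_le_add (pow_le_pow_of_le_one (norm_nonneg q) hq.le hneg)
      (pow_le_pow_of_le_one (norm_nonneg q) hq.le hpos)

theorem eulerFunction_eq_tsum_pentagonal (hq : ‖q‖ < 1) :
    eulerFunction q = ∑' k : ℕ, (-1) ^ k * (q ^ pentagonal (-k) - q ^ pentagonal (k + 1)) := by
  have hq0 := norm_nonneg q
  have hgeo := summable_geometric_of_lt_one hq0 hq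
  set M := Real.exp (∑' n : ℕ, ‖q‖ ^ n)
  have hterm (k n : ℕ) :
      ‖q ^ ((k + 1) * n) * ∏ i ∈ Finset.range (n + 1), (1 - q ^ (k + i + 1))‖ ≤ ‖q‖ ^ n * M := by
    rw [norm_mul, norm_pow]
    exact mul_le_mul (pow_le_pow_of_le_one hq0 hq.le (Nat.le_mul_of_pos_left _ k.succ_pos))
      (norm_prod_one_sub_pow_le hq k (n + 1)) (norm_nonneg _) (by positivity)
  refine Pentagonal.tprod_one_sub_pow (tendsto_pow_atTop_nhds_zero_of_norm_lt_one hq)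
    (fun k ↦ .of_norm_bounded (hgeo.mul_right M) (hterm k)) (fun k ↦ ?_)
    (summable_pentagonal hq) ?_
  · refine multipliable_one_add_of_summable (f := fun n ↦ -q ^ (n + k + 1)) ?_
    simpa [add_assoc] using (summable_nat_add_iff (k + 1)).2 hgeo
  · refine squeeze_zero_norm (a := fun k ↦ ‖q‖ ^ k * ∑' n, ‖q‖ ^ n * M) (fun k ↦ ?_) ?_
    · rw [norm_mul, norm_mul, norm_pow, norm_neg, norm_one, one_pow, one_mul, norm_pow]
      refine mul_le_mul (pow_le_pow_of_le_one hq0 hq.le ?_)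
        (tsum_of_norm_bounded (hgeo.mul_right M).hasSum (hterm k)) (norm_nonneg _) (by positivity)
      rw [Nat.le_div_iff_mul_le two_pos]
      nlinarith
    · simpa using (tendsto_pow_atTop_nhds_zero_of_lt_one hq0 hq).mul_const (∑' n, ‖q‖ ^ n * M)

theorem norm_coeff_pentagonalSeries_le_one (n : ℕ) : ‖coeff n (pentagonalSeries ℂ)‖ ≤ 1 := by
  by_cases hn : n ∈ Set.range pentagonal
  · obtain ⟨k, rfl⟩ := hn
    rcases Int.units_eq_one_or k.negOnePow with h | h <;>
      simp [coeff_pentagonalSeries_pentagonal, h]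
  · simp [coeff_pentagonalSeries_eq_zero ℂ hn]

theorem hasSumAt_pentagonalSeries (hq : ‖q‖ < 1) :
    HasSumAt (pentagonalSeries ℂ) q (eulerFunction q) := by
  have hsum : Summable fun n ↦ coeff n (pentagonalSeries ℂ) * q ^ n := by
    refine .of_norm_bounded (summable_geometric_of_lt_one (norm_nonneg q) hq) fun n ↦ ?_
    rw [norm_mul, norm_pow]
    exact mul_le_of_le_one_left (by positivity) (norm_coeff_pentagonalSeries_le_one n)
  have hpent := hsum.hasSum
  rw [← pentagonal_injective.hasSum_iff fun n hn ↦ by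
      rw [coeff_pentagonalSeries_eq_zero ℂ hn, zero_mul],
    ← (Equiv.neg ℤ).hasSum_iff] at hpent
  have htsum : eulerFunction q = ∑' n, coeff n (pentagonalSeries ℂ) * q ^ n := by
    rw [eulerFunction_eq_tsum_pentagonal hq]
    refine (summable_pentagonal hq).hasSum.unique (hpent.nat_add_neg_add_one.congr_fun fun k ↦ ?_)
    have hk : ((k : ℤ) + 1).natAbs = k + 1 := rfl
    simp only [Function.comp_apply, Equiv.neg_apply, neg_neg, coeff_pentagonalSeries_pentagonal,
      Int.negOnePow_neg, Int.coe_negOnePow, Int.natAbs_natCast, hk]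
    ring
  exact htsum ▸ hsum.hasSum

theorem hasSumAt_partitionSeries (hq : ‖q‖ < 1) :
    HasSumAt (partitionSeries ℂ) q (eulerFunction q)⁻¹ :=
  .inv (mul_comm (partitionSeries ℂ) _ ▸ partitionSeries_mul_pentagonalSeries)
    (fun _ ↦ hasSumAt_pentagonalSeries) (fun _ ↦ eulerFunction_ne_zero) hq

end EulerFunction

section LevelOne

open UpperHalfPlane hiding I
open ModularForm PowerSeries MatrixGroups Function

theorem norm_qParam_one_lt_one (τ : ℍ) : ‖Periodic.qParam 1 τ‖ < 1 := by
  simpa using UpperHalfPlane.norm_qParam_lt_one 1 τ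

theorem qExpansion_eq_of_hasSumAt {E : Type*} [FunLike E ℍ ℂ] {k : ℤ} [ModularFormClass E 𝒮ℒ k]
    (f : E) {F : ℂ⟦X⟧} (h : ∀ τ : ℍ, HasSumAt F (Periodic.qParam 1 τ) (f τ)) :
    qExpansion 1 f = F := by
  ext m
  refine (ModularFormClass.qExpansion_coeff_unique (c := fun m ↦ coeff m F) one_pos
    one_mem_strictPeriods_SL (f := f) (fun τ ↦ ?_) m).symm
  simpa [HasSumAt] using h τ

theorem eta_eq_qParam_mul_eulerFunction (τ : ℍ) :
    eta τ = Periodic.qParam 24 τ * eulerFunction (Periodic.qParam 1 τ) :=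
  rfl

theorem qExpansion_discriminant :
    qExpansion 1 discriminant = X * pentagonalSeries ℂ ^ 24 := by
  refine qExpansion_eq_of_hasSumAt CuspForm.discriminant fun τ ↦ ?_
  have hΔ : CuspForm.discriminant τ =
      Periodic.qParam 1 τ * eulerFunction (Periodic.qParam 1 τ) ^ 24 := by
    change discriminant τ = _
    rw [discriminant, eta_eq_qParam_mul_eulerFunction, mul_pow, Periodic.qParam,
      ← Complex.exp_nat_mul]
    congr 2
    push_cast
    field_simp
  exact hΔ ▸ (HasSumAt.X _).mul ((hasSumAt_pentagonalSeries (norm_qParam_one_lt_one τ)).pow 24)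

/-- The generating function of the divisor sums `σ k n`. -/
noncomputable def sigmaSeries (k : ℕ) : ℤ⟦X⟧ :=
  .mk fun n ↦ (ArithmeticFunction.sigma k n : ℤ)

theorem coeff_sigmaSeries (k n : ℕ) :
    coeff n (sigmaSeries k) = (ArithmeticFunction.sigma k n : ℤ) :=
  coeff_mk _ _

theorem constantCoeff_sigmaSeries (k : ℕ) : constantCoeff (sigmaSeries k) = 0 := by
  simp [sigmaSeries]

theorem qExpansion_E₄ :
    qExpansion 1 E₄ = map (Int.castRingHom ℂ) (1 + C 240 * sigmaSeries 3) := by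
  ext n
  rw [EisensteinSeries.E_qExpansion_coeff _ ⟨2, rfl⟩, coeff_map, map_add, coeff_C_mul]
  by_cases hn : n = 0
  · simp [hn, sigmaSeries]
  · norm_num [hn, sigmaSeries, show bernoulli 4 = -1 / 30 by decide +kernel, coeff_one]

theorem qExpansion_E₆ :
    qExpansion 1 E₆ = map (Int.castRingHom ℂ) (1 - C 504 * sigmaSeries 5) := by
  ext n
  rw [EisensteinSeries.E_qExpansion_coeff _ ⟨3, rfl⟩, coeff_map, map_sub, coeff_C_mul]
  by_cases hn : n = 0
  · simp [hn, sigmaSeries]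
  · norm_num [hn, sigmaSeries, show bernoulli 6 = 1 / 42 by decide +kernel, coeff_one]

theorem exists_sub_smul_E₄_pow {a : ℕ} {k : ℤ} (hk : k = 4 * a) (f : ModularForm 𝒮ℒ k)
    {F : ℤ⟦X⟧} (hF : qExpansion 1 f = map (Int.castRingHom ℂ) F) :
    ∃ (g : ModularForm 𝒮ℒ k) (G : ℤ⟦X⟧),
      qExpansion 1 g = map (Int.castRingHom ℂ) (X * G) ∧
      F = C (coeff 0 F) * (1 + C 240 * sigmaSeries 3) ^ a + X * G := by
  set c := coeff 0 F
  let e : ModularForm 𝒮ℒ k := mcast (a := (a : ℤ) * 4) (by rw [hk, mul_comm]) (E₄.pow a)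
  have he : qExpansion 1 e = map (Int.castRingHom ℂ) ((1 + C 240 * sigmaSeries 3) ^ a) := by
    rw [map_pow, ← qExpansion_E₄]
    exact ModularForm.qExpansion_pow one_pos one_mem_strictPeriods_SL _ _
  obtain ⟨G, hG⟩ : X ∣ F - C c * (1 + C 240 * sigmaSeries 3) ^ a := by
    rw [X_dvd_iff]
    simp [constantCoeff_sigmaSeries, c]
  refine ⟨f - (c : ℂ) • e, G, ?_, by rw [← hG]; ring⟩
  rw [← hG, FunLike.coe_sub, ModularForm.qExpansion_sub one_pos one_mem_strictPeriods_SL, hF,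
    FunLike.coe_smul, ModularForm.qExpansion_smul one_pos one_mem_strictPeriods_SL, he, map_sub,
    map_mul, map_C, smul_eq_C_mul]
  rfl

theorem eq_zero_of_qExpansion_eq_X_mul {k : ℤ} (hk : k < 12) (g : ModularForm 𝒮ℒ k) {G : ℤ⟦X⟧}
    (hg : qExpansion 1 g = map (Int.castRingHom ℂ) (X * G)) : G = 0 := by
  have hcusp : (qExpansion 1 g).coeff 0 = 0 := by simp [hg]
  have hzero := rank_zero_iff_forall_zero.1 (CuspForm.rank_eq_zero_of_weight_lt_twelve hk)
    (toCuspForm g hcusp)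
  have hg0 : (g : ℍ → ℂ) = 0 := funext fun τ ↦ by simpa using DFunLike.congr_fun hzero τ
  rw [hg0, qExpansion_zero] at hg
  have hXG := map_injective _ Int.cast_injective (hg.symm.trans (map_zero _).symm)
  exact (mul_eq_zero.1 hXG).resolve_left X_ne_zero

theorem exists_qExpansion_eq_partitionSeries_pow_mul {k : ℤ} (g : ModularForm 𝒮ℒ k) {G : ℤ⟦X⟧}
    (hg : qExpansion 1 g = map (Int.castRingHom ℂ) (X * G)) :
    ∃ f : ModularForm 𝒮ℒ (k - 12),
      qExpansion 1 f = map (Int.castRingHom ℂ) (partitionSeries ℤ ^ 24 * G) := by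
  have hcusp : (qExpansion 1 g).coeff 0 = 0 := by simp [hg]
  have hq := qExpansion_eq_qExpansion_discriminant_mul g hcusp
  rw [qExpansion_discriminant, hg, map_mul, map_X, mul_assoc] at hq
  refine ⟨CuspForm.discriminantEquiv (toCuspForm g hcusp), ?_⟩
  rw [map_mul, map_pow, map_partitionSeries, mul_left_cancel₀ X_ne_zero hq, ← mul_assoc, ← mul_pow,
    partitionSeries_mul_pentagonalSeries, one_pow, one_mul]

/-- As `E₄ ≡ 1` in `R`, subtracting a multiple of `E₄ ^ a` and dividing by `Δ` lowers the weight
by `12`. -/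
theorem exists_polynomial_map_eq_aeval {R : Type*} [CommRing R] (h240 : (240 : R) = 0) (a : ℕ)
    {k : ℤ} (hk : k = 4 * a) (f : ModularForm 𝒮ℒ k) {F : ℤ⟦X⟧}
    (hF : qExpansion 1 f = map (Int.castRingHom ℂ) F) :
    ∃ Q : Polynomial R, Q.natDegree ≤ a / 3 ∧
      map (Int.castRingHom R) F = Polynomial.aeval (X * pentagonalSeries R ^ 24) Q := by
  induction a using Nat.strong_induction_on generalizing k F with
  | h a ih =>
    obtain ⟨g, G, hg, hFG⟩ := exists_sub_smul_E₄_pow hk f hF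
    have hFG' : map (Int.castRingHom R) F = C ((coeff 0 F : ℤ) : R) +
        X * map (Int.castRingHom R) G := by
      have hE₄ : map (Int.castRingHom R) (1 + C 240 * sigmaSeries 3) = 1 := by
        rw [map_add, map_one, map_mul, map_C, map_ofNat, h240, map_zero, zero_mul, add_zero]
      conv_lhs => rw [hFG]
      rw [map_add, map_mul, map_pow, hE₄, map_C, map_mul, map_X, one_pow, mul_one, eq_intCast]
    rcases lt_or_ge a 3 with ha | ha
    · refine ⟨Polynomial.C ((coeff 0 F : ℤ) : R), by simp, ?_⟩
      rw [hFG', eq_zero_of_qExpansion_eq_X_mul (by lia) g hg]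
      simp
    · obtain ⟨f', hf'⟩ := exists_qExpansion_eq_partitionSeries_pow_mul g hg
      obtain ⟨Q, hQdeg, hQ⟩ := ih (a - 3) (by lia) (by lia) f' hf'
      have hG : pentagonalSeries ℤ ^ 24 * (partitionSeries ℤ ^ 24 * G) = G := by
        rw [← mul_assoc, ← mul_pow, mul_comm (pentagonalSeries ℤ),
          partitionSeries_mul_pentagonalSeries, one_pow, one_mul]
      refine ⟨Polynomial.C ((coeff 0 F : ℤ) : R) + Polynomial.X * Q, ?_, ?_⟩
      · refine (Polynomial.natDegree_add_le _ _).trans (max_le (by simp) ?_)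
        exact Polynomial.natDegree_mul_le.trans (by
          have := Polynomial.natDegree_X_le (R := R)
          lia)
      · rw [hFG', ← hG, map_mul, map_pow, map_pentagonalSeries, hQ]
        simp [mul_assoc]

theorem twelve_mul_discriminant_eq :
    12 * (X * pentagonalSeries ℤ ^ 24) = 5 * sigmaSeries 3 + 7 * sigmaSeries 5 +
      12 * (100 * sigmaSeries 3 ^ 2 + 8000 * sigmaSeries 3 ^ 3 - 147 * sigmaSeries 5 ^ 2) := by
  have hforms : (1728 : ℂ) • (CuspForm.discriminant : ℍ → ℂ) = ⇑(E₄.pow 3) - ⇑(E₆.pow 2) := by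
    ext τ
    change (1728 : ℂ) * discriminant τ = E₄ τ ^ 3 - E₆ τ ^ 2
    rw [discriminant_eq_E₄_cube_sub_E₆_sq τ]
    ring
  have hseries : C 1728 * (X * pentagonalSeries ℤ ^ 24) =
      (1 + C 240 * sigmaSeries 3) ^ 3 - (1 - C 504 * sigmaSeries 5) ^ 2 := by
    refine map_injective (Int.castRingHom ℂ) Int.cast_injective ?_
    rw [map_sub, map_pow, map_pow, ← qExpansion_E₄, ← qExpansion_E₆,
      ← ModularForm.qExpansion_pow one_pos one_mem_strictPeriods_SL,
      ← ModularForm.qExpansion_pow one_pos one_mem_strictPeriods_SL,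
      ← ModularForm.qExpansion_sub one_pos one_mem_strictPeriods_SL, ← hforms,
      ModularForm.qExpansion_smul one_pos one_mem_strictPeriods_SL, CuspForm.coe_discriminant,
      qExpansion_discriminant, smul_eq_C_mul, map_mul, map_mul, map_pow, map_pentagonalSeries,
      map_C, map_X]
    rfl
  simp only [map_ofNat] at hseries
  have h144 : (144 : ℤ⟦X⟧) ≠ 0 := by
    rw [← map_ofNat C, Ne, map_eq_zero_iff _ C_injective]
    norm_num
  refine mul_left_cancel₀ h144 ?_
  linear_combination hseries

theorem two_dvd_coeff_sq (F : ℤ⟦X⟧) {n : ℕ} (hn : Odd n) : (2 : ℤ) ∣ coeff n (F ^ 2) := by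
  have h := coeff_expand_of_not_dvd 2 two_ne_zero (map (Int.castRingHom (ZMod 2)) F)
    hn.not_two_dvd_nat
  have hsq := pow_prime_pow_eq_expand 2 1 (map (Int.castRingHom (ZMod 2)) F)
  simp only [pow_one] at hsq
  rw [← hsq, ← map_pow, coeff_map] at h
  exact (ZMod.intCast_zmod_eq_zero_iff_dvd _ 2).1 h

theorem even_card_divisors {n : ℕ} (hn : n ≠ 0) (hsq : ¬ IsSquare n) : Even n.divisors.card := by
  rw [even_iff_two_dvd, ← ZMod.natCast_eq_zero_iff, Finset.card_eq_sum_ones, Nat.cast_sum]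
  refine Finset.sum_involution (fun d _ ↦ n / d) (fun _ _ ↦ rfl) (fun d hd _ hfix ↦ hsq ⟨d, ?_⟩)
    (fun d hd ↦ ?_) fun d hd ↦ ?_
  · conv_lhs => rw [← Nat.div_mul_cancel (Nat.dvd_of_mem_divisors hd), hfix]
  · exact Nat.mem_divisors.2 ⟨Nat.div_dvd_of_dvd (Nat.dvd_of_mem_divisors hd), hn⟩
  · exact Nat.div_div_self (Nat.dvd_of_mem_divisors hd) hn

theorem five_mul_sigma_three_add_seven_mul_sigma_five {n : ℕ} (hn : Odd n) :
    5 * ArithmeticFunction.sigma 3 n + 7 * ArithmeticFunction.sigma 5 n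
      ≡ 12 * n.divisors.card [MOD 24] := by
  have hodd : ∀ w : ZMod 24, 5 * (2 * w + 1) ^ 3 + 7 * (2 * w + 1) ^ 5 = 12 := by decide
  rw [← ZMod.natCast_eq_natCast_iff, ArithmeticFunction.sigma_apply,
    ArithmeticFunction.sigma_apply]
  push_cast
  rw [Finset.mul_sum, Finset.mul_sum, ← Finset.sum_add_distrib, mul_comm, ← nsmul_eq_mul,
    ← Finset.sum_const]
  refine Finset.sum_congr rfl fun d hd ↦ ?_
  obtain ⟨w, rfl⟩ := hn.of_dvd_nat (Nat.dvd_of_mem_divisors hd)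
  exact_mod_cast hodd w

theorem coeff_discriminant_eq_zero {n : ℕ} (hn : Odd n) (hsq : ¬ IsSquare n) :
    coeff n (X * pentagonalSeries (ZMod 2) ^ 24) = 0 := by
  have hcoeff := congrArg (coeff n) twelve_mul_discriminant_eq
  simp only [← map_ofNat (C (R := ℤ)), coeff_C_mul, map_add, map_sub, coeff_sigmaSeries]
    at hcoeff
  have hsigma := Nat.modEq_iff_dvd.1 (five_mul_sigma_three_add_seven_mul_sigma_five hn)
  obtain ⟨v, hv⟩ := even_card_divisors hn.pos.ne' hsq
  obtain ⟨u, hu⟩ := two_dvd_coeff_sq (sigmaSeries 5) hn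
  rw [hu] at hcoeff
  rw [hv] at hsigma
  have hdvd : (2 : ℤ) ∣ coeff n (X * pentagonalSeries ℤ ^ 24) := by lia
  rw [← map_pentagonalSeries (Int.castRingHom (ZMod 2)), ← map_pow,
    ← map_X (Int.castRingHom (ZMod 2)), ← map_mul, coeff_map]
  exact (ZMod.intCast_zmod_eq_zero_iff_dvd _ 2).2 hdvd

end LevelOne

section EtaPowEight

open UpperHalfPlane hiding I
open ModularForm Complex MatrixGroups Function

theorem qParam_add (h : ℝ) (z w : ℂ) :
    Periodic.qParam h (z + w) = Periodic.qParam h z * Periodic.qParam h w := by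
  simp only [Periodic.qParam, ← exp_add, mul_add, add_div]

theorem qParam_intCast (N : ℕ) [NeZero N] (j : ℤ) :
    Periodic.qParam N j = ZMod.stdAddChar (j : ZMod N) := by
  simp [Periodic.qParam, ZMod.stdAddChar_coe]

/-- The function `η⁸` on the upper half-plane. -/
noncomputable def etaPowEight (τ : ℍ) : ℂ := ModularForm.eta τ ^ 8

theorem etaPowEight_eq_qParam_mul (τ : ℍ) :
    etaPowEight τ = Periodic.qParam 3 τ * eulerFunction (Periodic.qParam 1 τ) ^ 8 := by
  rw [etaPowEight, eta_eq_qParam_mul_eulerFunction, mul_pow, Periodic.qParam, ← exp_nat_mul]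
  congr 2
  push_cast
  ring

/-- The exponent, modulo `3`, of the character through which `SL(2, ℤ)` acts on `η⁸`. -/
def etaExponent (γ : SL(2, ℤ)) : ZMod 3 :=
  γ 0 1 * γ 1 1 * (1 - (γ 1 0 : ZMod 3) ^ 2) + γ 1 0 * (γ 0 0 + γ 1 1)

theorem det_intCast_eq_one {R : Type*} [CommRing R] (γ : SL(2, ℤ)) :
    (γ 0 0 : R) * γ 1 1 - γ 0 1 * γ 1 0 = 1 := by
  have h := γ.det_coe
  rw [Matrix.det_fin_two] at h
  exact_mod_cast congrArg (Int.cast : ℤ → R) h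

theorem etaExponent_S : etaExponent ModularGroup.S = 0 := by
  decide

theorem etaExponent_mul_S (γ : SL(2, ℤ)) : etaExponent (γ * ModularGroup.S) = etaExponent γ := by
  have hdet := det_intCast_eq_one (R := ZMod 3) γ
  simp only [etaExponent, Matrix.SpecialLinearGroup.coe_mul, ModularGroup.coe_S, Matrix.mul_apply,
    Fin.sum_univ_two, Matrix.of_apply, Matrix.cons_val', Matrix.cons_val_zero, Matrix.cons_val_one,
    Matrix.cons_val_fin_one, mul_zero, mul_one, mul_neg, zero_add, add_zero, Int.cast_neg]
  generalize (γ 0 0 : ZMod 3) = a, (γ 0 1 : ZMod 3) = b, (γ 1 0 : ZMod 3) = c,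
    (γ 1 1 : ZMod 3) = d at hdet ⊢
  revert a b c d
  decide

theorem etaExponent_mul_T (γ : SL(2, ℤ)) :
    etaExponent (γ * ModularGroup.T) = etaExponent γ + 1 := by
  have hdet := det_intCast_eq_one (R := ZMod 3) γ
  simp only [etaExponent, Matrix.SpecialLinearGroup.coe_mul, ModularGroup.coe_T, Matrix.mul_apply,
    Fin.sum_univ_two, Matrix.of_apply, Matrix.cons_val', Matrix.cons_val_zero, Matrix.cons_val_one,
    Matrix.cons_val_fin_one, mul_zero, mul_one, add_zero, Int.cast_add]
  generalize (γ 0 0 : ZMod 3) = a, (γ 0 1 : ZMod 3) = b, (γ 1 0 : ZMod 3) = c,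
    (γ 1 1 : ZMod 3) = d at hdet ⊢
  revert a b c d
  decide

theorem etaPowEight_slash_S : etaPowEight ∣[(4 : ℤ)] ModularGroup.S = etaPowEight := by
  ext τ
  have hsqrt {w : ℂ} : sqrt w ^ 8 = w ^ 4 := by
    rw [sqrt, ← cpow_nat_mul]
    norm_num
  have heta : ModularForm.eta (-τ : ℂ)⁻¹ = (sqrt I)⁻¹ * (sqrt τ * ModularForm.eta τ) := by
    simpa [neg_div, inv_neg] using eta_comp_eq_csqrt_I_inv τ.2
  rw [SL_slash_apply, modular_S_smul, ModularGroup.denom_S, etaPowEight, etaPowEight, coe_mk, heta,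
    mul_pow, mul_pow, inv_pow, hsqrt, hsqrt, I_pow_four]
  field_simp [ne_zero τ]

theorem slash_T_apply (k : ℤ) (f : ℍ → ℂ) (τ : ℍ) :
    (f ∣[k] ModularGroup.T) τ = f ((1 : ℝ) +ᵥ τ) := by
  have hdenom : denom (ModularGroup.T : SL(2, ℤ)) τ = 1 := by
    rw [ModularGroup.denom_apply]
    simp [ModularGroup.T]
  rw [SL_slash_apply, modular_T_smul, hdenom, one_zpow, mul_one]

theorem etaPowEight_slash_T :
    etaPowEight ∣[(4 : ℤ)] ModularGroup.T = (ZMod.stdAddChar (1 : ZMod 3) : ℂ) • etaPowEight := by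
  ext τ
  have hq₁ : Periodic.qParam 1 1 = 1 := by simp [Periodic.qParam]
  have hq₃ : Periodic.qParam 3 1 = ZMod.stdAddChar (1 : ZMod 3) := by
    simpa using qParam_intCast 3 1
  rw [slash_T_apply, Pi.smul_apply, smul_eq_mul, etaPowEight_eq_qParam_mul,
    etaPowEight_eq_qParam_mul, coe_vadd, ofReal_one, qParam_add, qParam_add, hq₁, hq₃,
    one_mul, mul_assoc]

theorem etaPowEight_slash (γ : SL(2, ℤ)) :
    etaPowEight ∣[(4 : ℤ)] γ = (ZMod.stdAddChar (etaExponent γ) : ℂ) • etaPowEight := by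
  have hmem : γ ∈ Subgroup.closure {ModularGroup.S, ModularGroup.T} := by
    simp [SpecialLinearGroup.SL2Z_generators]
  have hgen : ∀ y ∈ ({ModularGroup.S, ModularGroup.T} : Set SL(2, ℤ)), ∃ c : ZMod 3,
      (∀ x, etaExponent (x * y) = etaExponent x + c) ∧
        etaPowEight ∣[(4 : ℤ)] y = (ZMod.stdAddChar c : ℂ) • etaPowEight := by
    rintro _ (rfl | rfl)
    · exact ⟨0, by simpa using etaExponent_mul_S, by simpa using etaPowEight_slash_S⟩
    · exact ⟨1, etaExponent_mul_T, etaPowEight_slash_T⟩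
  induction hmem using Subgroup.closure_induction_right with
  | one => simp [etaExponent]
  | mul_right x _ y hy ih =>
    obtain ⟨c, hexp, hslash⟩ := hgen y hy
    rw [SlashAction.slash_mul, ih, SL_smul_slash, hslash, hexp, AddChar.map_add_eq_mul, mul_smul]
  | mul_inv_cancel x _ y hy ih =>
    obtain ⟨c, hexp, hslash⟩ := hgen y hy
    have hinv : (ZMod.stdAddChar c : ℂ) • etaPowEight ∣[(4 : ℤ)] y⁻¹ = etaPowEight := by
      rw [← SL_smul_slash, ← hslash, ← SlashAction.slash_mul, mul_inv_cancel, SlashAction.slash_one]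
    have hx := hexp (x * y⁻¹)
    rw [inv_mul_cancel_right] at hx
    rw [SlashAction.slash_mul, ih, SL_smul_slash, hx, AddChar.map_add_eq_mul, mul_smul, hinv]

end EtaPowEight

section Hecke

open UpperHalfPlane hiding I
open ModularForm MatrixGroups

theorem etaPowEight_pow_slash (n : ℕ) (γ : SL(2, ℤ)) :
    (etaPowEight ^ n) ∣[(4 * n : ℤ)] γ =
      (ZMod.stdAddChar (n • etaExponent γ) : ℂ) • etaPowEight ^ n := by
  induction n with
  | zero => simpa using is_invariant_one γ
  | succ n ih =>
    rw [pow_succ, Nat.cast_succ, mul_add, mul_one, mul_slash_SL2, ih, etaPowEight_slash,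
      smul_mul_smul_comm, ← AddChar.map_add_eq_mul, succ_nsmul]

theorem inv_etaPowEight_slash (γ : SL(2, ℤ)) :
    etaPowEight⁻¹ ∣[(-4 : ℤ)] γ = (ZMod.stdAddChar (-etaExponent γ) : ℂ) • etaPowEight⁻¹ := by
  have h := div_slash_SL2 0 4 γ 1 etaPowEight
  rw [is_invariant_one, etaPowEight_slash, one_div, one_div, zero_sub] at h
  rw [h, AddChar.map_neg_eq_inv]
  ext τ
  simp [mul_comm]

theorem inv_etaPowEight_slash_slash {g g' : GL (Fin 2) ℝ} (hg' : 0 < g'.det.val) {A B : SL(2, ℤ)}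
    (h : g * (B : GL (Fin 2) ℝ) = (A : GL (Fin 2) ℝ) * g') :
    (etaPowEight⁻¹ ∣[(-4 : ℤ)] g) ∣[(-4 : ℤ)] B =
      (ZMod.stdAddChar (-etaExponent A) : ℂ) • (etaPowEight⁻¹ ∣[(-4 : ℤ)] g') := by
  rw [SL_slash, ← SlashAction.slash_mul, h, SlashAction.slash_mul, ← SL_slash,
    inv_etaPowEight_slash, smul_slash, σ, if_pos hg']
  rfl

variable (p : ℕ) [NeZero p]

/-- The matrix acting on the upper half-plane by `τ ↦ p τ`. -/
noncomputable def heckeScale : GL (Fin 2) ℝ :=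
  .mkOfDetNeZero !![p, 0; 0, 1] (by simp [NeZero.ne p])

/-- The matrix acting on the upper half-plane by `τ ↦ (τ + (p + 1) m) / p`. As `m` runs through the
residues modulo `p`, these complete `heckeScale p` to a set of representatives for the cosets of
the Hecke operator `T_p`; for `3 ∣ p + 1` the translations are divisible by `3`, and so do not
affect the character of `η⁸`. -/
noncomputable def heckeShift (m : ℤ) : GL (Fin 2) ℝ :=
  .mkOfDetNeZero !![1, (p + 1) * m; 0, p] (by simp [NeZero.ne p])

theorem det_heckeScale : (heckeScale p).det.val = p := by
  simp [heckeScale]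

theorem det_heckeShift (m : ℤ) : (heckeShift p m).det.val = p := by
  simp [heckeShift]

theorem det_heckeScale_pos : 0 < (heckeScale p).det.val := by
  rw [det_heckeScale]
  exact_mod_cast NeZero.pos p

theorem det_heckeShift_pos (m : ℤ) : 0 < (heckeShift p m).det.val := by
  rw [det_heckeShift]
  exact_mod_cast NeZero.pos p

theorem coe_GL_eq (γ : SL(2, ℤ)) :
    ((γ : GL (Fin 2) ℝ) : Matrix (Fin 2) (Fin 2) ℝ) = !![(γ 0 0 : ℝ), γ 0 1; γ 1 0, γ 1 1] :=
  Matrix.eta_fin_two _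

theorem heckeScale_mul_S :
    heckeScale p * (ModularGroup.S : GL (Fin 2) ℝ) =
      (ModularGroup.S : GL (Fin 2) ℝ) * heckeShift p 0 := by
  ext : 1
  rw [Units.val_mul, Units.val_mul, coe_GL_eq]
  simp [heckeScale, heckeShift, ModularGroup.coe_S]

theorem heckeShift_zero_mul_S :
    heckeShift p 0 * (ModularGroup.S : GL (Fin 2) ℝ) =
      (ModularGroup.S : GL (Fin 2) ℝ) * heckeScale p := by
  ext : 1
  rw [Units.val_mul, Units.val_mul, coe_GL_eq]
  simp [heckeScale, heckeShift, ModularGroup.coe_S]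

variable {p} in
theorem exists_heckeShift_mul_S (hp : 3 ∣ p + 1) {m k : ℤ} (hmk : (p : ℤ) ∣ m * k + 1) :
    ∃ A : SL(2, ℤ), etaExponent A = 0 ∧ heckeShift p m * (ModularGroup.S : GL (Fin 2) ℝ) =
      (A : GL (Fin 2) ℝ) * heckeShift p k := by
  obtain ⟨b, hb⟩ : (p : ℤ) ∣ (p + 1) ^ 2 * m * k + 1 := by
    obtain ⟨c, hc⟩ := hmk
    exact ⟨(p + 2) * m * k + c, by linear_combination hc⟩
  have h3 : ((p : ZMod 3) + 1) = 0 := by exact_mod_cast (ZMod.natCast_eq_zero_iff (p + 1) 3).2 hp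
  have hbR : ((p : ℝ) + 1) * m * ((p + 1) * k) + -b * p = -1 := by
    exact_mod_cast (by linear_combination hb : ((p : ℤ) + 1) * m * ((p + 1) * k) + -b * p = -1)
  obtain ⟨A, hA⟩ : ∃ A : SL(2, ℤ), A.val = !![(p + 1) * m, -b; p, -((p + 1) * k)] := by
    refine ⟨⟨_, ?_⟩, rfl⟩
    rw [Matrix.det_fin_two_of]
    linear_combination -hb
  refine ⟨A, by simp [etaExponent, hA, h3], ?_⟩
  ext i j
  rw [Units.val_mul, Units.val_mul, coe_GL_eq, coe_GL_eq, hA]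
  fin_cases i <;> fin_cases j <;>
    simp [heckeShift, ModularGroup.coe_S, ← hbR, mul_comm]

/-- The image of `η⁻⁸`, in weight `-4`, under the Hecke operator `T_p`. -/
noncomputable def heckeSum : ℍ → ℂ :=
  etaPowEight⁻¹ ∣[(-4 : ℤ)] heckeScale p +
    ∑ j : ZMod p, etaPowEight⁻¹ ∣[(-4 : ℤ)] heckeShift p j.val

variable {p} in
theorem inv_etaPowEight_slash_heckeShift_S [Fact p.Prime] (hp : 3 ∣ p + 1) {j : ZMod p}
    (hj : j ≠ 0) :
    (etaPowEight⁻¹ ∣[(-4 : ℤ)] heckeShift p j.val) ∣[(-4 : ℤ)] ModularGroup.S =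
      etaPowEight⁻¹ ∣[(-4 : ℤ)] heckeShift p (-j⁻¹).val := by
  have hdvd : (p : ℤ) ∣ j.val * (-j⁻¹).val + 1 := by
    rw [← ZMod.intCast_zmod_eq_zero_iff_dvd]
    simp [hj]
  obtain ⟨A, hA, h⟩ := exists_heckeShift_mul_S hp hdvd
  rw [inv_etaPowEight_slash_slash (det_heckeShift_pos p _) h, hA, neg_zero,
    AddChar.map_zero_eq_one, one_smul]

theorem heckeSum_slash_S [Fact p.Prime] (hp : 3 ∣ p + 1) :
    heckeSum p ∣[(-4 : ℤ)] ModularGroup.S = heckeSum p := by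
  have hscale := inv_etaPowEight_slash_slash (det_heckeShift_pos p 0) (heckeScale_mul_S p)
  have hshift := inv_etaPowEight_slash_slash (det_heckeScale_pos p) (heckeShift_zero_mul_S p)
  have hsum : ∑ j ∈ Finset.univ.erase (0 : ZMod p),
      (etaPowEight⁻¹ ∣[(-4 : ℤ)] heckeShift p j.val) ∣[(-4 : ℤ)] ModularGroup.S =
      ∑ j ∈ Finset.univ.erase (0 : ZMod p), etaPowEight⁻¹ ∣[(-4 : ℤ)] heckeShift p j.val :=
    Finset.sum_nbij' (fun j ↦ -j⁻¹) (fun j ↦ -j⁻¹) (by simp) (by simp) (by simp [inv_neg])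
      (by simp [inv_neg]) fun j hj ↦
        inv_etaPowEight_slash_heckeShift_S hp (Finset.ne_of_mem_erase hj)
  rw [etaExponent_S, neg_zero, AddChar.map_zero_eq_one, one_smul] at hscale hshift
  rw [heckeSum, SlashAction.add_slash, SlashAction.sum_slash,
    ← Finset.add_sum_erase _ _ (Finset.mem_univ 0), ← Finset.add_sum_erase _ _ (Finset.mem_univ 0),
    hsum, hscale, ZMod.val_zero, Nat.cast_zero, hshift, add_left_comm]

end Hecke

section LevelOneConstruction

open UpperHalfPlane hiding I
open ModularForm PowerSeries MatrixGroups Function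
open scoped Manifold

theorem mdifferentiable_of_hasSumAt {f : ℍ → ℂ} {F : ℂ⟦X⟧}
    (hF : ∀ τ : ℍ, HasSumAt F (Periodic.qParam 1 τ) (f τ)) : MDiff f := by
  let v (q : ℂ) : ℂ := ∑' n, coeff n F * q ^ n
  have hball (q : ℂ) (hq : ‖q‖ < 1) : HasSumAt F q (v q) := by
    refine Summable.hasSum ?_
    rcases eq_or_ne q 0 with rfl | hq₀
    · exact summable_of_ne_finset_zero (s := {0}) fun n hn ↦ by simp_all
    · have h := hF ⟨_, Periodic.im_invQParam_pos_of_norm_lt_one one_pos hq hq₀⟩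
      rw [coe_mk, Periodic.qParam_right_inv one_ne_zero hq₀] at h
      exact h.summable
  have hdiff := (HasSumAt.hasFPowerSeriesOnBall hball).differentiableOn
  rw [← ENNReal.coe_one, Metric.eball_coe, NNReal.coe_one] at hdiff
  rw [UpperHalfPlane.mdifferentiable_iff]
  refine (hdiff.comp (Periodic.differentiable_qParam (h := 1)).differentiableOn
    fun z hz ↦ ?_).congr fun z hz ↦ ?_
  · simpa using norm_qParam_one_lt_one ⟨z, hz⟩
  · rw [comp_apply, comp_apply, ofComplex_apply_of_im_pos hz]
    exact (hF ⟨z, hz⟩).tsum_eq.symm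

theorem exists_modularForm_of_slash_S_of_hasSumAt {k : ℤ} {f : ℍ → ℂ} {F : ℂ⟦X⟧}
    (hS : f ∣[k] ModularGroup.S = f) (hF : ∀ τ : ℍ, HasSumAt F (Periodic.qParam 1 τ) (f τ)) :
    ∃ g : ModularForm 𝒮ℒ k, qExpansion 1 g = F := by
  have hT : f ∣[k] ModularGroup.T = f := by
    ext τ
    have hq : Periodic.qParam 1 ↑((1 : ℝ) +ᵥ τ) = Periodic.qParam 1 τ := by
      rw [coe_vadd, Complex.ofReal_one, qParam_add]
      simp [Periodic.qParam]
    rw [slash_T_apply]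
    exact HasSum.unique (hq ▸ hF ((1 : ℝ) +ᵥ τ)) (hF τ)
  have hslash := SlashInvariantForm.slash_action_generators_SL2Z hS hT
  let g : ModularForm 𝒮ℒ k :=
    { toFun := f
      slash_action_eq' := by
        rintro _ ⟨γ, rfl⟩
        exact hslash γ
      holo' := mdifferentiable_of_hasSumAt hF
      bdd_at_cusps' := fun hc ↦ by
        rw [Subgroup.IsArithmetic.isCusp_iff_isCusp_SL2Z] at hc
        refine (OnePoint.isBoundedAt_iff_forall_SL2Z hc).2 fun γ _ ↦ ?_
        rw [hslash]
        exact isBoundedAtImInfty_of_hasSum_qExpansion one_pos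
          (c := fun m ↦ coeff m F) (by simpa [HasSumAt] using hF) }
  exact ⟨g, qExpansion_eq_of_hasSumAt g hF⟩

end LevelOneConstruction

section HeckeExpansion

open UpperHalfPlane hiding I
open ModularForm Complex PowerSeries MatrixGroups Function

variable (p : ℕ) [NeZero p]

theorem qParam_add_mul_intCast_div {h : ℝ} (hh : h ≠ 0) (w : ℂ) (m : ℤ) :
    Periodic.qParam h ((w + h * m) / p) =
      Periodic.qParam (h * p) w * ZMod.stdAddChar (m : ZMod p) := by
  have hh' : (h : ℂ) ≠ 0 := ofReal_ne_zero.2 hh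
  rw [← qParam_intCast]
  simp only [Periodic.qParam, ← exp_add]
  congr 1
  push_cast
  field_simp

theorem qParam_mul_natCast_pow (h : ℝ) (w : ℂ) :
    Periodic.qParam (h * p) w ^ p = Periodic.qParam h w := by
  have hp : (p : ℂ) ≠ 0 := Nat.cast_ne_zero.2 (NeZero.ne p)
  rw [Periodic.qParam, Periodic.qParam, ← exp_nat_mul, ofReal_mul, ofReal_natCast, mul_div_assoc',
    mul_comm (h : ℂ), mul_div_mul_left _ _ hp]

theorem inv_etaPowEight_slash_apply {g : GL (Fin 2) ℝ} (hg : 0 < g.det.val) (τ : ℍ) :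
    (etaPowEight⁻¹ ∣[(-4 : ℤ)] g) τ =
      (etaPowEight (g • τ))⁻¹ * (g.det.val : ℂ) ^ (-5 : ℤ) * denom g τ ^ 4 := by
  rw [slash_apply, σ, if_pos hg, abs_of_pos hg]
  norm_cast

theorem inv_etaPowEight_slash_heckeScale_apply (τ : ℍ) :
    (etaPowEight⁻¹ ∣[(-4 : ℤ)] heckeScale p) τ =
      ((p : ℂ) ^ 5 *
        (Periodic.qParam 3 τ ^ p * eulerFunction (Periodic.qParam 1 τ ^ p) ^ 8))⁻¹ := by
  have hdet := det_heckeScale_pos p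
  have hcoe : ((heckeScale p • τ : ℍ) : ℂ) = p * τ := by
    rw [coe_smul_of_det_pos hdet]
    simp [heckeScale, num, denom]
  have hdenom : denom (heckeScale p) τ = 1 := by simp [heckeScale, denom]
  have hq (h : ℝ) : Periodic.qParam h (p * τ) = Periodic.qParam h τ ^ p := by
    rw [Periodic.qParam, Periodic.qParam, ← exp_nat_mul]
    congr 1
    ring
  rw [inv_etaPowEight_slash_apply hdet, etaPowEight_eq_qParam_mul, hcoe, hq, hq, hdenom,
    det_heckeScale, one_pow, mul_one, mul_inv ((p : ℂ) ^ 5), mul_comm, zpow_neg]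
  push_cast
  rfl

variable {p} in
theorem inv_etaPowEight_slash_heckeShift_apply {r : ℕ} (hr : 3 * r = p + 1) (j : ZMod p) (τ : ℍ) :
    (etaPowEight⁻¹ ∣[(-4 : ℤ)] heckeShift p j.val) τ =
      (p * Periodic.qParam (3 * p) τ)⁻¹ * (ZMod.stdAddChar (-(r * j) : ZMod p) *
        (eulerFunction (Periodic.qParam p τ * ZMod.stdAddChar j) ^ 8)⁻¹) := by
  have hp : (p : ℂ) ≠ 0 := Nat.cast_ne_zero.2 (NeZero.ne p)
  have hr' : (3 * r : ℂ) = p + 1 := by exact_mod_cast hr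
  have hdet := det_heckeShift_pos p j.val
  have hcoe : ((heckeShift p j.val • τ : ℍ) : ℂ) = (τ + 3 * r * j.val) / p := by
    rw [coe_smul_of_det_pos hdet, hr']
    simp [heckeShift, num, denom, -ZMod.natCast_val]
  have hdenom : denom (heckeShift p j.val) τ = p := by simp [heckeShift, denom]
  have hq₃ : Periodic.qParam 3 ((τ + 3 * r * j.val) / p) =
      Periodic.qParam (3 * p) τ * ZMod.stdAddChar (r * j : ZMod p) := by
    simpa [mul_assoc, ZMod.natCast_zmod_val, -ZMod.natCast_val] using
      qParam_add_mul_intCast_div p three_ne_zero τ (r * j.val)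
  have hq₁ : Periodic.qParam 1 ((τ + 3 * r * j.val) / p) =
      Periodic.qParam p τ * ZMod.stdAddChar j := by
    have h3r : (3 * r : ZMod p) = 1 := by
      simpa using congrArg (Nat.cast : ℕ → ZMod p) hr
    simpa [h3r, ZMod.natCast_zmod_val, -ZMod.natCast_val] using
      qParam_add_mul_intCast_div p one_ne_zero τ (3 * r * j.val)
  rw [inv_etaPowEight_slash_apply hdet, etaPowEight_eq_qParam_mul, hcoe, hq₃, hq₁, hdenom,
    det_heckeShift, AddChar.map_neg_eq_inv]
  push_cast
  field_simp

/-- The `q`-expansion of `p⁵ η^{8p} · T_p(η⁻⁸)` for `p + 1 = 3 * r`, over an arbitrary ring. -/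
noncomputable def heckeSeries (R : Type*) [CommRing R] (r : ℕ) : R⟦X⟧ :=
  pentagonalSeries R ^ (8 * p) * (expand p (NeZero.ne p) (partitionSeries R) ^ 8 +
    C (p ^ 5 : R) * X ^ r * dissection p r (partitionSeries R ^ 8))

theorem map_heckeSeries {R S : Type*} [CommRing R] [CommRing S] (φ : R →+* S) (r : ℕ) :
    map φ (heckeSeries p R r) = heckeSeries p S r := by
  simp only [heckeSeries, map_mul, map_add, map_pow, map_X, map_natCast, map_dissection,
    map_pentagonalSeries, map_partitionSeries, map_expand]

variable {p} in
theorem hasSumAt_dissection_partitionSeries_pow_eight {r : ℕ} (hr : 3 * r = p + 1) (τ : ℍ) :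
    HasSumAt (dissection p r (partitionSeries ℂ ^ 8)) (Periodic.qParam 1 τ)
      ((Periodic.qParam 3 τ)⁻¹ *
        (∑ j : ZMod p, etaPowEight⁻¹ ∣[(-4 : ℤ)] heckeShift p j.val) τ) := by
  have hnorm (j : ZMod p) : ‖Periodic.qParam p τ * ZMod.stdAddChar j‖ < 1 := by
    simpa using norm_qParam_lt_one p τ
  have hq : Periodic.qParam p τ ^ p = Periodic.qParam 1 τ := by
    simpa using qParam_mul_natCast_pow p 1 τ
  have hq₃ : Periodic.qParam (3 * p) τ ^ 3 = Periodic.qParam p τ := by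
    simpa [mul_comm] using qParam_mul_natCast_pow 3 p τ
  have hdissection := HasSumAt.dissection (by lia : r < p) (Periodic.qParam_ne_zero _)
    fun j ↦ (hasSumAt_partitionSeries (hnorm j)).pow 8
  rw [hq] at hdissection
  convert hdissection using 1
  simp only [Finset.sum_apply, inv_etaPowEight_slash_heckeShift_apply hr, inv_pow]
  rw [← Finset.mul_sum, ← mul_assoc, ← hq₃, ← pow_mul, hr, pow_succ _ p, qParam_mul_natCast_pow,
    ← mul_inv, mul_left_comm]

variable {p} in
theorem hasSumAt_heckeSeries {r : ℕ} (hr : 3 * r = p + 1) (τ : ℍ) :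
    HasSumAt (heckeSeries p ℂ r) (Periodic.qParam 1 τ)
      (((p ^ 5 : ℂ) • (etaPowEight ^ p * heckeSum p)) τ) := by
  have hp : (p : ℂ) ≠ 0 := Nat.cast_ne_zero.2 (NeZero.ne p)
  have hq := norm_qParam_one_lt_one τ
  have hqp := (pow_le_of_le_one (norm_nonneg _) hq.le (NeZero.ne p)).trans_lt hq
  rw [← norm_pow] at hqp
  have hq₃ := Periodic.qParam_ne_zero (h := 3) τ
  have hqr : Periodic.qParam 1 τ ^ r = Periodic.qParam 3 τ ^ p * Periodic.qParam 3 τ := by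
    have h := qParam_mul_natCast_pow 3 1 τ
    rw [Nat.cast_ofNat, one_mul] at h
    rw [← h, ← pow_mul, hr, pow_succ]
  have heuler := eulerFunction_ne_zero hqp
  have hsum := ((hasSumAt_pentagonalSeries hq).pow (8 * p)).mul
    ((((hasSumAt_partitionSeries hqp).expand p (NeZero.ne p)).pow 8).add
      (((HasSumAt.const (p ^ 5 : ℂ) _).mul ((HasSumAt.X _).pow r)).mul
        (hasSumAt_dissection_partitionSeries_pow_eight hr τ)))
  rw [heckeSeries]
  convert hsum using 1
  rw [Pi.smul_apply, Pi.mul_apply, heckeSum, Pi.add_apply, Pi.pow_apply, etaPowEight_eq_qParam_mul,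
    inv_etaPowEight_slash_heckeScale_apply, hqr, smul_eq_mul, mul_pow, ← pow_mul]
  field_simp

theorem exists_modularForm_qExpansion_eq_heckeSeries [Fact p.Prime] {r : ℕ} (hr : 3 * r = p + 1) :
    ∃ f : ModularForm 𝒮ℒ (4 * (p - 1)),
      qExpansion 1 f = map (Int.castRingHom ℂ) (heckeSeries p ℤ r) := by
  rw [map_heckeSeries]
  refine exists_modularForm_of_slash_S_of_hasSumAt ?_ (hasSumAt_heckeSeries hr)
  rw [SL_smul_slash, mul_sub_one, sub_eq_add_neg, mul_slash_SL2, etaPowEight_pow_slash,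
    heckeSum_slash_S p ⟨r, hr.symm⟩, etaExponent_S, smul_zero, AddChar.map_zero_eq_one, one_smul]

end HeckeExpansion

section ModTwo

open PowerSeries

theorem pow_eight_eq_expand (F : (ZMod 2)⟦X⟧) : F ^ 8 = expand 8 (by decide) F :=
  pow_prime_pow_eq_expand 2 3 F

theorem exists_polynomial_heckeSeries_eq_aeval :
    ∃ Q : Polynomial (ZMod 2), Q.natDegree ≤ 9 ∧
      heckeSeries 29 (ZMod 2) 10 = Polynomial.aeval (X * pentagonalSeries (ZMod 2) ^ 24) Q := by
  have : Fact (Nat.Prime 29) := ⟨by norm_num⟩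
  obtain ⟨f, hf⟩ := exists_modularForm_qExpansion_eq_heckeSeries 29 (r := 10) rfl
  obtain ⟨Q, hdeg, hQ⟩ :=
    exists_polynomial_map_eq_aeval (R := ZMod 2) (by decide) 28 (by norm_num) f hf
  exact ⟨Q, hdeg, by rw [← hQ, map_heckeSeries]⟩

theorem heckeSeries_eq_pow_eight :
    heckeSeries 29 (ZMod 2) 10 = (pentagonalSeries (ZMod 2) ^ 29 *
      (expand 29 (by decide) (partitionSeries (ZMod 2)) +
        X ^ 2 * dissection 29 23 (partitionSeries (ZMod 2)))) ^ 8 := by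
  have hdissection : dissection 29 10 (partitionSeries (ZMod 2) ^ 8) =
      X ^ 6 * dissection 29 23 (partitionSeries (ZMod 2)) ^ 8 := by
    rw [pow_eight_eq_expand, pow_eight_eq_expand]
    exact dissection_expand _ (by decide) rfl (by decide) _
  have hadd (F G : (ZMod 2)⟦X⟧) : (F + G) ^ 8 = F ^ 8 + G ^ 8 := by
    simp only [pow_eight_eq_expand, map_add]
  have hC : C ((29 : ℕ) ^ 5 : ZMod 2) = 1 := by
    rw [← map_one C]
    exact congrArg C (by decide)
  rw [heckeSeries, hdissection, hC, mul_pow, hadd]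
  ring

theorem X_sq_dvd_pentagonalSeries_pow_mul_expand_add_dissection_sub :
    X ^ 2 ∣ pentagonalSeries (ZMod 2) ^ 29 *
      (expand 29 (by decide) (partitionSeries (ZMod 2)) +
        X ^ 2 * dissection 29 23 (partitionSeries (ZMod 2))) -
      (1 + X * pentagonalSeries (ZMod 2) ^ 24) := by
  have hP : constantCoeff (partitionSeries (ZMod 2)) = 1 := by
    simpa [constantCoeff_pentagonalSeries] using
      congrArg constantCoeff (partitionSeries_mul_pentagonalSeries (R := ZMod 2))
  have hf : coeff 1 (pentagonalSeries (ZMod 2) ^ 29) = 1 := by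
    rw [coeff_one_pow, constantCoeff_pentagonalSeries, coeff_one_pentagonalSeries]
    decide
  have hexpand : coeff 1 (expand 29 (by decide) (partitionSeries (ZMod 2))) = 0 :=
    coeff_expand_of_not_dvd 29 (by decide) _ (by decide)
  rw [X_pow_dvd_iff]
  intro m hm
  interval_cases m
  · simp [constantCoeff_pentagonalSeries, hP]
  · simp [coeff_one_mul, hf, hexpand, hP, constantCoeff_pentagonalSeries, coeff_X_pow_mul']

theorem pentagonalSeries_pow_mul_expand_add_dissection :
    pentagonalSeries (ZMod 2) ^ 29 * (expand 29 (by decide) (partitionSeries (ZMod 2)) +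
      X ^ 2 * dissection 29 23 (partitionSeries (ZMod 2))) =
      1 + X * pentagonalSeries (ZMod 2) ^ 24 := by
  obtain ⟨Q, hdeg, hQ⟩ := exists_polynomial_heckeSeries_eq_aeval
  have hlow := X_sq_dvd_pentagonalSeries_pow_mul_expand_add_dissection_sub
  have hroot := heckeSeries_eq_pow_eight
  set W := pentagonalSeries (ZMod 2) ^ 29 *
    (expand 29 (by decide) (partitionSeries (ZMod 2)) +
      X ^ 2 * dissection 29 23 (partitionSeries (ZMod 2)))
  set D := X * pentagonalSeries (ZMod 2) ^ 24 with hD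
  have hpow : (W - (1 + D)) ^ 8 = Polynomial.aeval D (Q - (1 + Polynomial.X ^ 8)) := by
    calc (W - (1 + D)) ^ 8 = W ^ 8 - (1 + D ^ 8) := by
          simp only [pow_eight_eq_expand, map_sub, map_add, map_one]
      _ = Polynomial.aeval D (Q - (1 + Polynomial.X ^ 8)) := by
          rw [← hroot, hQ, map_sub, map_add, map_one, map_pow, Polynomial.aeval_X]
  have hzero : Q - (1 + Polynomial.X ^ 8) = 0 := by
    refine eq_zero_of_X_pow_dvd_aeval (u := pentagonalSeries (ZMod 2) ^ 24) (n := 2 * 8) ?_ ?_ ?_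
    · rw [map_pow, constantCoeff_pentagonalSeries, one_pow]
      exact one_ne_zero
    · refine (Polynomial.natDegree_sub_le _ _).trans_lt (max_lt (by lia) ?_)
      rw [add_comm, ← map_one Polynomial.C, Polynomial.natDegree_X_pow_add_C]
      lia
    · rw [← hD, ← hpow, pow_mul]
      exact pow_dvd_pow_of_dvd hlow 8
  rw [hzero, map_zero] at hpow
  exact sub_eq_zero.1 (eq_zero_of_pow_eq_zero hpow)

theorem pentagonalSeries_pow_eight_mul_expand_add_dissection :
    pentagonalSeries (ZMod 2) ^ 8 * expand 29 (by decide) (partitionSeries (ZMod 2)) +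
      X ^ 2 * (pentagonalSeries (ZMod 2) ^ 8 * dissection 29 23 (partitionSeries (ZMod 2))) =
      partitionSeries (ZMod 2) ^ 21 + X * pentagonalSeries (ZMod 2) ^ 3 := by
  have hW := pentagonalSeries_pow_mul_expand_add_dissection
  have hPf := partitionSeries_mul_pentagonalSeries (R := ZMod 2)
  set f := pentagonalSeries (ZMod 2)
  set P := partitionSeries (ZMod 2)
  have hPf21 : P ^ 21 * f ^ 21 = 1 := by rw [← mul_pow, hPf, one_pow]
  linear_combination P ^ 21 * hW + (X * f ^ 3 - f ^ 8 * (expand 29 (by decide) P +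
    X ^ 2 * dissection 29 23 P)) * hPf21

theorem dissection_mk_numRegularPartitions :
    dissection 29 23 (.mk fun n ↦ (numRegularPartitions 232 n : ZMod 2)) =
      pentagonalSeries (ZMod 2) ^ 8 * dissection 29 23 (partitionSeries (ZMod 2)) := by
  have hmk : .mk (fun n ↦ (numRegularPartitions 232 n : ZMod 2)) =
      expand 29 (by decide) (pentagonalSeries (ZMod 2) ^ 8) * partitionSeries (ZMod 2) := by
    have hreg := mk_numRegularPartitions_mul_pentagonalSeries (R := ZMod 2) 232 (by decide)
    rw [pow_eight_eq_expand, ← expand_mul]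
    linear_combination partitionSeries (ZMod 2) * hreg -
      .mk (fun n ↦ (numRegularPartitions 232 n : ZMod 2)) *
        partitionSeries_mul_pentagonalSeries (R := ZMod 2)
  rw [hmk, dissection_expand_mul _ (by decide)]

theorem isSquare_of_coeff_pentagonalSeries_ne_zero {R : Type*} [CommRing R] {i : ℕ}
    (hi : coeff i (pentagonalSeries R) ≠ 0) : IsSquare (24 * i + 1) := by
  obtain ⟨k, rfl⟩ : i ∈ Set.range pentagonal := by
    by_contra h
    exact hi (coeff_pentagonalSeries_eq_zero R h)
  refine ⟨(6 * k - 1).natAbs, ?_⟩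
  zify
  rw [abs_mul_abs_self]
  linear_combination 12 * two_mul_natCast_pentagonal k

theorem exists_natCast_eq_of_coeff_expand_mul_expand_ne_zero {R : Type*} [CommRing R] {d N : ℕ}
    (hd : d ≠ 0) (hN : N ≠ 0) {F G : R⟦X⟧} {n : ℕ}
    (h : coeff n (expand d hd F * expand N hN G) ≠ 0) :
    ∃ i, coeff i F ≠ 0 ∧ ((d * i : ℕ) : ZMod N) = n := by
  rw [coeff_mul] at h
  obtain ⟨⟨a, b⟩, hab, hne⟩ := Finset.exists_ne_zero_of_sum_ne_zero h
  rw [Finset.HasAntidiagonal.mem_antidiagonal] at hab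
  obtain ⟨i, rfl⟩ : d ∣ a := by
    by_contra hda
    exact left_ne_zero_of_mul hne (coeff_expand_of_not_dvd d hd F hda)
  obtain ⟨j, rfl⟩ : N ∣ b := by
    by_contra hNb
    exact right_ne_zero_of_mul hne (coeff_expand_of_not_dvd N hN G hNb)
  refine ⟨i, coeff_expand_mul d hd F i ▸ left_ne_zero_of_mul hne, ?_⟩
  simpa using congrArg (Nat.cast (R := ZMod N)) hab

theorem coeff_pentagonalSeries_pow_eight_mul_expand_eq_zero {N : ℕ}
    (hN : ¬ IsSquare (3 * N + 1 : ZMod 29)) (G : (ZMod 2)⟦X⟧) :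
    coeff N (pentagonalSeries (ZMod 2) ^ 8 * expand 29 (by decide) G) = 0 := by
  by_contra h
  rw [pow_eight_eq_expand] at h
  obtain ⟨i, hi, hiN⟩ := exists_natCast_eq_of_coeff_expand_mul_expand_ne_zero _ _ h
  have hsq := (isSquare_of_coeff_pentagonalSeries_ne_zero hi).map (Nat.castRingHom (ZMod 29))
  refine hN (hiN ▸ ?_)
  have hcast : (Nat.castRingHom (ZMod 29)) (24 * i + 1) = 3 * (8 * i : ℕ) + 1 := by
    rw [eq_natCast]
    push_cast
    ring
  rwa [← hcast]

theorem coeff_X_mul_pentagonalSeries_pow_three_eq_zero {N : ℕ}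
    (hN : ¬ IsSquare (3 * N + 1 : ZMod 29)) :
    coeff N (X * pentagonalSeries (ZMod 2) ^ 3) = 0 := by
  rcases N.eq_zero_or_pos with rfl | hpos
  · exact coeff_zero_X_mul _
  obtain ⟨M, hM⟩ : ∃ M, 8 * N = M + 7 := ⟨8 * N - 7, by lia⟩
  have hcoeff : coeff N (X * pentagonalSeries (ZMod 2) ^ 3) =
      coeff M (X * pentagonalSeries (ZMod 2) ^ 24) := by
    have hpow : (X * pentagonalSeries (ZMod 2) ^ 3) ^ 8 =
        X ^ 7 * (X * pentagonalSeries (ZMod 2) ^ 24) := by ring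
    rw [← coeff_expand_mul 8 (by decide), ← pow_eight_eq_expand, hpow, hM, coeff_X_pow_mul]
  rw [hcoeff]
  refine coeff_discriminant_eq_zero (by grind) fun ⟨r, hr⟩ ↦ hN ⟨2 * r, ?_⟩
  have h29 : (29 : ZMod 29) = 0 := by decide
  have hr' : (8 * N : ZMod 29) = r * r + 7 := by exact_mod_cast congrArg Nat.cast (hr ▸ hM)
  linear_combination 4 * hr' + (1 - N) * h29

theorem numRegularPartitions_modEq_numMultipartitions_of_not_isSquare {N : ℕ} (hN₂ : 2 ≤ N)
    (hN : ¬ IsSquare (3 * N + 1 : ZMod 29)) :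
    numRegularPartitions 232 (29 * N - 35) ≡ numMultipartitions 21 N [MOD 2] := by
  obtain ⟨m, rfl⟩ := Nat.exists_eq_add_of_le' hN₂
  rw [← ZMod.natCast_eq_natCast_iff]
  have hcoeff := congrArg (coeff (m + 2)) pentagonalSeries_pow_eight_mul_expand_add_dissection
  rw [← dissection_mk_numRegularPartitions, ← mk_numMultipartitions, map_add, map_add,
    coeff_pentagonalSeries_pow_eight_mul_expand_eq_zero hN, coeff_X_pow_mul,
    coeff_X_mul_pentagonalSeries_pow_three_eq_zero hN, coeff_dissection, coeff_mk, coeff_mk,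
    zero_add, add_zero] at hcoeff
  rwa [show 29 * (m + 2) - 35 = 29 * m + 23 by lia]

end ModTwo

theorem stmt_11 (n : ℕ) :
    (∀ B ∈ ({3, 6, 10, 12, 13, 14, 15, 18, 20, 23, 24, 25, 26, 28} : Finset ℕ),
      numRegularPartitions 232 (841 * n + 29 * B - 35) ≡
        numMultipartitions 21 (29 * n + B) [MOD 2]) := by
  have hclasses : ∀ B ∈ ({3, 6, 10, 12, 13, 14, 15, 18, 20, 23, 24, 25, 26, 28} : Finset ℕ),
      2 ≤ B ∧ ¬ IsSquare (3 * B + 1 : ZMod 29) := by decide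
  intro B hB
  obtain ⟨hB₂, hnonsquare⟩ := hclasses B hB
  have hcast : ((29 * n + B : ℕ) : ZMod 29) = B := by
    rw [Nat.cast_add, Nat.cast_mul, ZMod.natCast_self, zero_mul, zero_add]
  rw [show 841 * n + 29 * B - 35 = 29 * (29 * n + B) - 35 by lia]
  exact numRegularPartitions_modEq_numMultipartitions_of_not_isSquare (by lia)
    (by rwa [hcast])
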